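/- Let S : [0,∞) → [0,∞) be continuous with S(0) = 0 and |S(q) − 3q| ≤ C₀ q^{1/2} for all q ≥ 0 and some C₀ > 0. Suppose that for every κ > 0 there is a nonnegative solution p_κ ∈ C¹([0,∞)) of the TOV equation with ρ = S(p), with p_κ(0) = e^{4κ}/3, satisfying the Buchdahl bound 2m_κ(r)/r ≤ 8/9 for all r > 0, where m_κ(r) = 4π ∫₀^r s² S(p_κ(s)) ds; suppose also that there exists a positive solution p* ∈ C¹([0,∞)) of the massless TOV equation with p*(0) = 1/3 satisfying 2m*(r)/r ≤ 8/9 for all r > 0. Then there exist parameters 0 < α₁ < α₂ < 1/4, a threshold κ₀ > 0, and constants δ > 0 and C > 0 such that for every κ ≥ κ₀ and every r ∈ [κ^{α₁} e^{−2κ}, κ^{α₂} e^{−2κ}] the following estimates hold: | r² S(p_κ(r)) − 3/(56π) | ≤ C κ^{−δ}, | r² p_κ(r) − 1/(56π) | ≤ C κ^{−δ}, | m_κ(r)/r − 3/14 | ≤ C κ^{−δ}, | e^{2λ_κ(r)} − 7/4 | ≤ C κ^{−δ}, | 2r μ_κ′(r) − 1 | ≤ C κ^{−δ}, and r |λ_κ′(r)|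 ≤ C κ^{−δ}, where e^{−2λ_κ(r)} := 1 − 2m_κ(r)/r, μ_κ′(r) := e^{2λ_κ(r)} ( m_κ(r)/r² + 4π r p_κ(r) ), and λ_κ′(r) := e^{2λ_κ(r)} ( 4π r S(p_κ(r)) − m_κ(r)/r² ). -/

import Mathlib

open MeasureTheory

noncomputable section

/-- The quasi-local mass `m(r) = 4π ∫₀^r s² S(p(s)) ds` associated with a pressure profile `p`
and inverse equation of state `ρ = S(p)`. -/
def tovMass (S p : ℝ → ℝ) (r : ℝ) : ℝ :=
  4 * Real.pi * ∫ s in (0:ℝ)..r, s ^ 2 * S (p s)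

/-- `p` is a nonnegative `C¹([0,∞))` solution of the TOV equation with equation of state
`ρ = S(p)`. -/
def SolvesTOV (S p : ℝ → ℝ) : Prop :=
  ContDiffOn ℝ 1 p (Set.Ici 0) ∧ (∀ r : ℝ, 0 ≤ r → 0 ≤ p r) ∧
  (∀ r : ℝ, 0 < r → 2 * tovMass S p r / r < 1) ∧
  (∀ r : ℝ, 0 < r →
    deriv p r = -(S (p r) + p r) / (1 - 2 * tovMass S p r / r) *
      (tovMass S p r / r ^ 2 + 4 * Real.pi * r * p r))

/-!
Let `W` be Volterra's Lyapunov function `bkzEnergy`. In logarithmic radius `t = log r`, the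
quantities `u = 4πr²p` and `v = 1 - 2m/r` solve a planar autonomous system up to the defect
`e = 4πr²(ρ - 3p)`. Multiplying the vector field by `v` turns it into the Lotka–Volterra field
`(u (4v - 2 - 4u), v (1 - v - 6u))`, whose interior equilibrium is the BKZ point `(1/14, 4/7)`,
and along the exact flow `W' = -(12 (u - 1/14)² + 2 (v - 4/7)²) / v`.

As `|e| ≤ η u` with `η = C₀ e^{-κ}` wherever `p ≥ e^{2κ}`, the energy can grow only by
`60 η (t - t₀)`, so `u` stays away from `0` over the logarithmically long annulus; there the
dissipation dominates a fixed multiple of `W`, and Grönwall's inequality gives exponential decay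
in `t`, i.e. a negative power of `κ`. The scaling `p(0) = e^{4κ} / 3` makes the energy at
`r = e^{-2κ} / 100` bounded in `κ`, and since `r⁵⁰ p` increases while the equation of state is
nearly radiative, the pressure stays above `e^{2κ}` across the annulus.
-/

/-- Volterra's relative entropy `x - 1 - log x` of a positive number with respect to `1`. -/
def volterraEntropy (x : ℝ) : ℝ :=
  x - 1 - Real.log x

theorem volterraEntropy_le {x : ℝ} (hx : 0 < x) : volterraEntropy x ≤ (x - 1) ^ 2 / x := by
  have hlog := Real.one_sub_inv_le_log_of_pos hx
  have : (x - 1) ^ 2 / x = x - 2 + x⁻¹ := by field_simp; ring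
  rw [volterraEntropy]
  linarith

theorem sq_sqrt_sub_one_le_volterraEntropy {x : ℝ} (hx : 0 < x) :
    (√x - 1) ^ 2 ≤ volterraEntropy x := by
  have hlog := Real.log_le_sub_one_of_pos (Real.sqrt_pos.2 hx)
  rw [Real.log_sqrt hx.le] at hlog
  rw [volterraEntropy]
  nlinarith [Real.sq_sqrt hx.le]

theorem volterraEntropy_nonneg {x : ℝ} (hx : 0 < x) : 0 ≤ volterraEntropy x :=
  (sq_nonneg _).trans (sq_sqrt_sub_one_le_volterraEntropy hx)

theorem sq_sub_one_le_mul_volterraEntropy {x M : ℝ} (hx : 0 < x) (hM : x ≤ M) :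
    (x - 1) ^ 2 ≤ (√M + 1) ^ 2 * volterraEntropy x := by
  calc (x - 1) ^ 2 = (√x + 1) ^ 2 * (√x - 1) ^ 2 := by
        rw [← mul_pow]
        congr 1
        linarith [Real.mul_self_sqrt hx.le]
    _ ≤ (√M + 1) ^ 2 * volterraEntropy x := by
        gcongr
        exact sq_sqrt_sub_one_le_volterraEntropy hx

/-- The Lotka–Volterra Lyapunov function centred at the BKZ point `(u, v) = (1/14, 4/7)`, where
`u = 4πr²p` and `v = 1 - 2m/r`. -/
def bkzEnergy (u v : ℝ) : ℝ :=
  3 / 14 * volterraEntropy (14 * u) + 8 / 7 * volterraEntropy (7 / 4 * v)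

/-- The quadratic form bounding the decay of `bkzEnergy` along the flow with radiative equation of
state `ρ = 3p`, for which `v ≤ 1`. -/
def bkzDissipation (u v : ℝ) : ℝ :=
  12 * (u - 1 / 14) ^ 2 + 2 * (v - 4 / 7) ^ 2

/-- The `u`-component of the TOV vector field in logarithmic radius, with `u = 4πr²p`,
`v = 1 - 2m/r` and radiation defect `e = 4πr²(ρ - 3p)`. -/
def bkzFieldU (u v e : ℝ) : ℝ :=
  2 * u - (4 * u + e) * ((1 - v) / 2 + u) / v

/-- The `v`-component of the TOV vector field in logarithmic radius, with the notation of
`bkzFieldU`. -/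
def bkzFieldV (u v e : ℝ) : ℝ :=
  1 - v - 6 * u - 2 * e

/-- An exponential decay rate for the energy on the sublevel set `{bkzEnergy ≤ B}`: on it `u` is
bounded below by this number. -/
def bkzRate (B : ℝ) : ℝ :=
  Real.exp (-(14 * B / 3) - 1) / 14

section Energy

variable {u v e η B : ℝ}

theorem bkzRate_pos : 0 < bkzRate B := by
  rw [bkzRate]
  positivity

theorem bkzRate_le (hB : 0 ≤ B) : bkzRate B ≤ 1 / 14 := by
  rw [bkzRate]
  gcongr
  exact Real.exp_le_one_iff.2 (by linarith)

theorem bkzEnergy_nonneg (hu : 0 < u) (hv : 0 < v) : 0 ≤ bkzEnergy u v := by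
  have hu' := volterraEntropy_nonneg (x := 14 * u) (by positivity)
  have hv' := volterraEntropy_nonneg (x := 7 / 4 * v) (by positivity)
  rw [bkzEnergy]
  positivity

theorem bkzEnergy_le (hu : 0 < u) (hv : 0 < v) :
    bkzEnergy u v ≤ 3 * (u - 1 / 14) ^ 2 / u + 2 * (v - 4 / 7) ^ 2 / v := by
  calc bkzEnergy u v
      ≤ 3 / 14 * ((14 * u - 1) ^ 2 / (14 * u)) +
          8 / 7 * ((7 / 4 * v - 1) ^ 2 / (7 / 4 * v)) := by
        rw [bkzEnergy]
        gcongr <;> exact volterraEntropy_le (by positivity)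
    _ = 3 * (u - 1 / 14) ^ 2 / u + 2 * (v - 4 / 7) ^ 2 / v := by
        field_simp
        ring

theorem sq_add_sq_le_bkzEnergy (hu : u ∈ Set.Ioc 0 (2 / 3)) (hv : v ∈ Set.Ioc 0 1) :
    (u - 1 / 14) ^ 2 + (v - 4 / 7) ^ 2 ≤ 10 * bkzEnergy u v := by
  have hsqrt : (√16 + 1) ^ 2 = (25 : ℝ) := by
    rw [show (16 : ℝ) = 4 ^ 2 by norm_num, Real.sqrt_sq (by norm_num)]
    norm_num
  have hu' := sq_sub_one_le_mul_volterraEntropy (x := 14 * u) (M := 16)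
    (by linarith [hu.1]) (by linarith [hu.2])
  have hv' := sq_sub_one_le_mul_volterraEntropy (x := 7 / 4 * v) (M := 16)
    (by linarith [hv.1]) (by linarith [hv.2])
  rw [hsqrt] at hu' hv'
  rw [bkzEnergy]
  nlinarith [sq_nonneg (u - 1 / 14), sq_nonneg (v - 4 / 7)]

theorem bkzRate_le_of_bkzEnergy_le (hu : 0 < u) (hv : 0 < v) (h : bkzEnergy u v ≤ B) :
    bkzRate B ≤ u := by
  have hv' := volterraEntropy_nonneg (x := 7 / 4 * v) (by positivity)
  have hlog : -(14 * B / 3) - 1 ≤ Real.log (14 * u) := by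
    rw [bkzEnergy, volterraEntropy] at h
    linarith
  have hexp := (Real.le_log_iff_exp_le (by positivity)).1 hlog
  rw [bkzRate]
  linarith

theorem bkzRate_mul_bkzEnergy_le (hu : 0 < u) (hv : 1 / 14 ≤ v) (h : bkzEnergy u v ≤ B) :
    bkzRate B * bkzEnergy u v ≤ bkzDissipation u v := by
  have hv0 : 0 < v := by linarith
  have hcu : bkzRate B ≤ u := bkzRate_le_of_bkzEnergy_le hu hv0 h
  have hcv : bkzRate B ≤ v := (bkzRate_le ((bkzEnergy_nonneg hu hv0).trans h)).trans hv
  have hdiv : ∀ {x k y : ℝ}, bkzRate B ≤ x → 0 < x → 0 ≤ k →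
      bkzRate B * (k * y ^ 2 / x) ≤ k * y ^ 2 := fun {x k y} hx hx0 hk => by
    rw [← mul_div_assoc, div_le_iff₀ hx0, mul_comm]
    gcongr
  calc bkzRate B * bkzEnergy u v
      ≤ bkzRate B * (3 * (u - 1 / 14) ^ 2 / u + 2 * (v - 4 / 7) ^ 2 / v) :=
        mul_le_mul_of_nonneg_left (bkzEnergy_le hu hv0) bkzRate_pos.le
    _ ≤ 3 * (u - 1 / 14) ^ 2 + 2 * (v - 4 / 7) ^ 2 := by
        rw [mul_add]
        exact add_le_add (hdiv hcu hu (by norm_num)) (hdiv hcv hv0 (by norm_num))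
    _ ≤ bkzDissipation u v := by
        rw [bkzDissipation]
        linarith [sq_nonneg (u - 1 / 14)]

theorem bkzEnergy_field_eq (hu : u ≠ 0) (hv : v ≠ 0) :
    3 * ((u - 1 / 14) / u * bkzFieldU u v e) + 2 * ((v - 4 / 7) / v * bkzFieldV u v e) =
      -bkzDissipation u v / v -
        e / u * (3 * (u - 1 / 14) * ((1 - v) / 2 + u) + 4 * (v - 4 / 7) * u) / v := by
  rw [bkzFieldU, bkzFieldV, bkzDissipation]
  field_simp
  ring

theorem bkzEnergy_field_le (hu : u ∈ Set.Ioc 0 (2 / 3)) (hv : v ∈ Set.Icc (1 / 9) 1)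
    (he : |e| ≤ η * u) :
    3 * ((u - 1 / 14) / u * bkzFieldU u v e) + 2 * ((v - 4 / 7) / v * bkzFieldV u v e) ≤
      -bkzDissipation u v + 60 * η := by
  obtain ⟨hu0, hu1⟩ := hu
  obtain ⟨hv0, hv1⟩ := hv
  have hvpos : 0 < v := by linarith
  have hD : 0 ≤ bkzDissipation u v := by rw [bkzDissipation]; positivity
  have hdiss : bkzDissipation u v ≤ bkzDissipation u v / v :=
    (le_div_iff₀ hvpos).2 (mul_le_of_le_one_right hD hv1)
  have hη : |e / u| ≤ η := by rwa [abs_div, abs_of_pos hu0, div_le_iff₀ hu0]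
  have hX : |3 * (u - 1 / 14) * ((1 - v) / 2 + u) + 4 * (v - 4 / 7) * u| ≤ 20 / 3 := by
    rw [abs_le]
    constructor <;> nlinarith
  have herr :
      |e / u * (3 * (u - 1 / 14) * ((1 - v) / 2 + u) + 4 * (v - 4 / 7) * u) / v| ≤ 60 * η := by
    have hη0 : 0 ≤ η := (abs_nonneg _).trans hη
    rw [abs_div, abs_mul, abs_of_pos hvpos, div_le_iff₀ hvpos]
    calc _ ≤ η * (20 / 3) := by gcongr
      _ = 60 * η * (1 / 9) := by ring
      _ ≤ 60 * η * v := by gcongr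
  rw [bkzEnergy_field_eq hu0.ne' hvpos.ne', neg_div]
  linarith [neg_le_of_abs_le herr]

end Energy

/-- An orbit, over a set `I` of logarithmic radii `t`, of the TOV equation in the variables
`u = 4πr²p` and `v = 1 - 2m/r`, driven by a radiation defect `e = 4πr²(ρ - 3p)` of relative size
at most `η`. The bounds on `u` and `v` are those that Buchdahl's inequality provides. -/
structure IsBKZOrbit (η : ℝ) (u v e : ℝ → ℝ) (I : Set ℝ) : Prop where
  hasDerivAt_u : ∀ t ∈ I, HasDerivAt u (bkzFieldU (u t) (v t) (e t)) t
  hasDerivAt_v : ∀ t ∈ I, HasDerivAt v (bkzFieldV (u t) (v t) (e t)) t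
  u_mem : ∀ t ∈ I, u t ∈ Set.Ioc 0 (2 / 3)
  v_mem : ∀ t ∈ I, v t ∈ Set.Icc (1 / 9) 1
  abs_e_le : ∀ t ∈ I, |e t| ≤ η * u t

theorem le_gronwallBound_of_hasDerivAt_le {f f' : ℝ → ℝ} {δ K ε a b : ℝ}
    (hf : ∀ x ∈ Set.Icc a b, HasDerivAt f (f' x) x) (ha : f a ≤ δ)
    (bound : ∀ x ∈ Set.Icc a b, f' x ≤ K * f x + ε) :
    ∀ x ∈ Set.Icc a b, f x ≤ gronwallBound δ K ε (x - a) :=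
  le_gronwallBound_of_liminf_deriv_right_le
    (fun x hx => (hf x hx).continuousAt.continuousWithinAt)
    (fun x hx _ hr =>
      (hf x (Set.Ico_subset_Icc_self hx)).hasDerivWithinAt.liminf_right_slope_le hr)
    ha (fun x hx => bound x (Set.Ico_subset_Icc_self hx))

theorem hasDerivAt_bkzEnergy {u v : ℝ → ℝ} {t u' v' : ℝ} (hu : HasDerivAt u u' t)
    (hv : HasDerivAt v v' t) (hu0 : 0 < u t) (hv0 : 0 < v t) :
    HasDerivAt (fun s => bkzEnergy (u s) (v s))
      (3 * ((u t - 1 / 14) / u t * u') + 2 * ((v t - 4 / 7) / v t * v')) t := by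
  have entropy : ∀ {f : ℝ → ℝ} {f' : ℝ}, HasDerivAt f f' t → 0 < f t →
      HasDerivAt (fun s => volterraEntropy (f s)) (f' - f' / f t) t :=
    fun hf hf0 => (hf.sub_const 1).sub (hf.log hf0.ne')
  refine (((entropy (hu.const_mul 14) (by positivity)).const_mul (3 / 14)).add
    ((entropy (hv.const_mul (7 / 4)) (by positivity)).const_mul (8 / 7))).congr_deriv ?_
  field_simp
  ring

section Orbit

variable {u v e : ℝ → ℝ} {η B t₀ t₁ t : ℝ} {I : Set ℝ}

theorem IsBKZOrbit.exists_hasDerivAt_bkzEnergy (h : IsBKZOrbit η u v e I) :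
    ∃ W' : ℝ → ℝ, (∀ t ∈ I, HasDerivAt (fun s => bkzEnergy (u s) (v s)) (W' t) t) ∧
      ∀ t ∈ I, W' t ≤ -bkzDissipation (u t) (v t) + 60 * η :=
  ⟨_, fun t ht => hasDerivAt_bkzEnergy (h.hasDerivAt_u t ht) (h.hasDerivAt_v t ht)
      (h.u_mem t ht).1 (by linarith [(h.v_mem t ht).1]),
    fun t ht => bkzEnergy_field_le (h.u_mem t ht) (h.v_mem t ht) (h.abs_e_le t ht)⟩

theorem IsBKZOrbit.eta_nonneg (h : IsBKZOrbit η u v e I) (ht : t ∈ I) : 0 ≤ η :=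
  nonneg_of_mul_nonneg_left ((abs_nonneg _).trans (h.abs_e_le t ht)) (h.u_mem t ht).1

theorem IsBKZOrbit.bkzEnergy_le_add (h : IsBKZOrbit η u v e (Set.Icc t₀ t₁))
    (ht : t ∈ Set.Icc t₀ t₁) (hB : bkzEnergy (u t₀) (v t₀) ≤ B) :
    bkzEnergy (u t) (v t) ≤ B + 60 * η * (t - t₀) := by
  obtain ⟨W', hW, hW'⟩ := h.exists_hasDerivAt_bkzEnergy
  have hgrow : ∀ s ∈ Set.Icc t₀ t₁, W' s ≤ 0 * bkzEnergy (u s) (v s) + 60 * η := fun s hs => by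
    have hD : 0 ≤ bkzDissipation (u s) (v s) := by rw [bkzDissipation]; positivity
    linarith [hW' s hs]
  simpa only [gronwallBound_K0] using le_gronwallBound_of_hasDerivAt_le hW hB hgrow t ht

theorem IsBKZOrbit.bkzEnergy_le_exp (h : IsBKZOrbit η u v e (Set.Icc t₀ t₁))
    (ht : t ∈ Set.Icc t₀ t₁) (hB : bkzEnergy (u t₀) (v t₀) ≤ B) (hη : 60 * η * (t₁ - t₀) ≤ 1) :
    bkzEnergy (u t) (v t) ≤
      B * Real.exp (-bkzRate (B + 1) * (t - t₀)) + 60 * η / bkzRate (B + 1) := by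
  have hη0 : 0 ≤ η := h.eta_nonneg ht
  have hc : 0 < bkzRate (B + 1) := bkzRate_pos
  have hcrude : ∀ s ∈ Set.Icc t₀ t₁, bkzEnergy (u s) (v s) ≤ B + 1 := fun s hs => by
    have hstep : 60 * η * (s - t₀) ≤ 60 * η * (t₁ - t₀) := by gcongr; exact hs.2
    linarith [h.bkzEnergy_le_add hs hB]
  obtain ⟨W', hW, hW'⟩ := h.exists_hasDerivAt_bkzEnergy
  have hdecay : ∀ s ∈ Set.Icc t₀ t₁,
      W' s ≤ -bkzRate (B + 1) * bkzEnergy (u s) (v s) + 60 * η := fun s hs => by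
    have hcoercive := bkzRate_mul_bkzEnergy_le (h.u_mem s hs).1
      (by linarith [(h.v_mem s hs).1]) (hcrude s hs)
    linarith [hW' s hs]
  have hgronwall := le_gronwallBound_of_hasDerivAt_le hW hB hdecay t ht
  rw [gronwallBound_of_K_ne_0 (neg_ne_zero.2 hc.ne')] at hgronwall
  have hexp := Real.exp_pos (-bkzRate (B + 1) * (t - t₀))
  have hdrop : 60 * η / -bkzRate (B + 1) * (Real.exp (-bkzRate (B + 1) * (t - t₀)) - 1) ≤
      60 * η / bkzRate (B + 1) := by
    rw [div_neg, neg_mul, ← mul_neg, neg_sub]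
    exact mul_le_of_le_one_right (by positivity) (by linarith)
  exact hgronwall.trans (add_le_add_right hdrop _)

end Orbit

/-- Buchdahl's inequality `2m/r ≤ 8/9`. -/
def BuchdahlBound (S p : ℝ → ℝ) : Prop :=
  ∀ r : ℝ, 0 < r → 2 * tovMass S p r / r ≤ 8 / 9

/-- Above the pressure level `L`, the equation of state `ρ = S(p)` agrees with the radiative one
`ρ = 3p` up to relative error `η`. -/
def IsNearlyRadiative (S : ℝ → ℝ) (L η : ℝ) : Prop :=
  ∀ q : ℝ, 0 ≤ q → L ≤ q → |S q - 3 * q| ≤ η * q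

/-- The scale-invariant pressure `u = 4πr²p`. -/
def scaledPressure (p : ℝ → ℝ) (r : ℝ) : ℝ :=
  4 * Real.pi * r ^ 2 * p r

/-- The metric coefficient `v = e^{-2λ} = 1 - 2m/r`. -/
def metricFactor (S p : ℝ → ℝ) (r : ℝ) : ℝ :=
  1 - 2 * tovMass S p r / r

/-- The scale-invariant deviation `e = 4πr²(ρ - 3p)` from the radiative equation of state. -/
def radiationDefect (S p : ℝ → ℝ) (r : ℝ) : ℝ :=
  4 * Real.pi * r ^ 2 * (S (p r) - 3 * p r)

theorem tovMass_const (K : ℝ) (p : ℝ → ℝ) (r : ℝ) :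
    tovMass (fun _ => K) p r = 4 * Real.pi / 3 * K * r ^ 3 := by
  rw [tovMass, intervalIntegral.integral_mul_const, integral_pow]
  norm_num
  ring

theorem tovMass_mono {S₁ S₂ p : ℝ → ℝ} {r : ℝ} (hr : 0 ≤ r)
    (h₁ : IntervalIntegrable (fun s => s ^ 2 * S₁ (p s)) volume 0 r)
    (h₂ : IntervalIntegrable (fun s => s ^ 2 * S₂ (p s)) volume 0 r)
    (h : ∀ s ∈ Set.Icc 0 r, S₁ (p s) ≤ S₂ (p s)) : tovMass S₁ p r ≤ tovMass S₂ p r :=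
  mul_le_mul_of_nonneg_left (intervalIntegral.integral_mono_on hr h₁ h₂ fun s hs =>
    mul_le_mul_of_nonneg_left (h s hs) (sq_nonneg s)) (by positivity)

theorem isNearlyRadiative_of_abs_sub_le_sqrt {S : ℝ → ℝ} {C₀ L : ℝ} (hC₀ : 0 ≤ C₀) (hL : 0 < L)
    (hS : ∀ q, 0 ≤ q → |S q - 3 * q| ≤ C₀ * √q) : IsNearlyRadiative S L (C₀ / √L) := by
  intro q hq hLq
  calc |S q - 3 * q| ≤ C₀ * √q := hS q hq
    _ = C₀ / √L * (√L * √q) := by field_simp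
    _ ≤ C₀ / √L * (√q * √q) := by gcongr
    _ = C₀ / √L * q := by rw [Real.mul_self_sqrt hq]

namespace SolvesTOV

variable {S p : ℝ → ℝ} {r L η : ℝ}

theorem continuousOn (h : SolvesTOV S p) : ContinuousOn p (Set.Ici 0) :=
  h.1.continuousOn

theorem pressure_nonneg (h : SolvesTOV S p) (hr : 0 ≤ r) : 0 ≤ p r :=
  h.2.1 r hr

theorem metricFactor_pos (h : SolvesTOV S p) (hr : 0 < r) : 0 < metricFactor S p r :=
  sub_pos.2 (h.2.2.1 r hr)

theorem hasDerivAt (h : SolvesTOV S p) (hr : 0 < r) : HasDerivAt p (deriv p r) r :=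
  ((h.1.differentiableOn one_ne_zero r hr.le).differentiableAt (Ici_mem_nhds hr)).hasDerivAt

theorem neg_deriv_eq (h : SolvesTOV S p) (hr : 0 < r) :
    -deriv p r = (S (p r) + p r) / metricFactor S p r *
      ((1 - metricFactor S p r) / 2 + scaledPressure p r) / r := by
  have hmass : tovMass S p r / r ^ 2 + 4 * Real.pi * r * p r =
      ((1 - metricFactor S p r) / 2 + scaledPressure p r) / r := by
    rw [metricFactor, scaledPressure]
    field_simp
    ring
  rw [h.2.2.2 r hr, hmass, ← metricFactor]
  ring

theorem intervalIntegrable (h : SolvesTOV S p) (hSc : ContinuousOn S (Set.Ici 0)) (hr : 0 ≤ r) :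
    IntervalIntegrable (fun s => s ^ 2 * S (p s)) volume 0 r := by
  refine ContinuousOn.intervalIntegrable ?_
  rw [Set.uIcc_of_le hr]
  exact ((continuousOn_id.pow 2).mul (hSc.comp h.continuousOn fun s hs =>
    h.pressure_nonneg hs)).mono Set.Icc_subset_Ici_self

theorem hasDerivAt_tovMass (h : SolvesTOV S p) (hSc : ContinuousOn S (Set.Ici 0)) (hr : 0 < r) :
    HasDerivAt (tovMass S p) (4 * Real.pi * (r ^ 2 * S (p r))) r := by
  have hcont : ContinuousOn (fun s => s ^ 2 * S (p s)) (Set.Ioi 0) :=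
    ((continuousOn_id.pow 2).mul (hSc.comp h.continuousOn fun s hs =>
      h.pressure_nonneg hs)).mono Set.Ioi_subset_Ici_self
  exact (intervalIntegral.integral_hasDerivAt_right (h.intervalIntegrable hSc hr.le)
    (hcont.stronglyMeasurableAtFilter isOpen_Ioi r hr)
    (hcont.continuousAt (Ioi_mem_nhds hr))).const_mul _

theorem tovMass_nonneg (h : SolvesTOV S p) (hS : ∀ q, 0 ≤ q → 0 ≤ S q) (hr : 0 ≤ r) :
    0 ≤ tovMass S p r :=
  mul_nonneg (by positivity) (intervalIntegral.integral_nonneg hr fun s hs =>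
    mul_nonneg (sq_nonneg s) (hS _ (h.pressure_nonneg hs.1)))

theorem metricFactor_le_one (h : SolvesTOV S p) (hS : ∀ q, 0 ≤ q → 0 ≤ S q) (hr : 0 < r) :
    metricFactor S p r ≤ 1 :=
  sub_le_self _ (div_nonneg (mul_nonneg zero_le_two (h.tovMass_nonneg hS hr.le)) hr.le)

theorem metricFactor_mem_Icc (h : SolvesTOV S p) (hS : ∀ q, 0 ≤ q → 0 ≤ S q)
    (hB : BuchdahlBound S p) (hr : 0 < r) : metricFactor S p r ∈ Set.Icc (1 / 9) 1 := by
  refine ⟨?_, h.metricFactor_le_one hS hr⟩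
  rw [metricFactor]
  linarith [hB r hr]

theorem antitoneOn (h : SolvesTOV S p) (hS : ∀ q, 0 ≤ q → 0 ≤ S q) :
    AntitoneOn p (Set.Ici 0) := by
  refine antitoneOn_of_deriv_nonpos (convex_Ici 0) h.continuousOn
    (fun r hr => (h.hasDerivAt (by simpa using hr)).differentiableAt.differentiableWithinAt)
    fun r hr => ?_
  have hr : 0 < r := by simpa using hr
  have hp := h.pressure_nonneg hr.le
  have hSp := hS _ hp
  have hv := h.metricFactor_pos hr
  have hv' := sub_nonneg.2 (h.metricFactor_le_one hS hr)
  rw [← neg_nonneg, h.neg_deriv_eq hr, scaledPressure]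
  positivity

theorem neg_deriv_le (h : SolvesTOV S p) (hS : ∀ q, 0 ≤ q → 0 ≤ S q) (hB : BuchdahlBound S p)
    {K M : ℝ} (hr : 0 < r) (hK : S (p r) + p r ≤ K)
    (hM : (1 - metricFactor S p r) / 2 + scaledPressure p r ≤ M) :
    -deriv p r ≤ 9 * K * M / r := by
  have hp := h.pressure_nonneg hr.le
  have hSp := hS _ hp
  obtain ⟨hv, hv1⟩ := h.metricFactor_mem_Icc hS hB hr
  have hM0 : 0 ≤ (1 - metricFactor S p r) / 2 + scaledPressure p r := by
    have := sub_nonneg.2 hv1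
    rw [scaledPressure]
    positivity
  have hquot : (S (p r) + p r) / metricFactor S p r ≤ 9 * K := by
    rw [div_le_iff₀ (by linarith)]
    nlinarith
  rw [h.neg_deriv_eq hr]
  gcongr
  linarith

theorem deriv_ge_near_center (h : SolvesTOV S p) (hSc : ContinuousOn S (Set.Ici 0))
    (hS : ∀ q, 0 ≤ q → 0 ≤ S q) (hB : BuchdahlBound S p)
    (hS4 : ∀ q, 0 ≤ q → q ≤ p 0 → S q ≤ 4 * p 0) (hr : 0 < r) :
    -(420 * Real.pi * p 0 ^ 2 * r) ≤ deriv p r := by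
  have hle : ∀ s, 0 ≤ s → p s ≤ p 0 := fun s hs => h.antitoneOn hS Set.self_mem_Ici hs hs
  have hSle : ∀ s, 0 ≤ s → S (p s) ≤ 4 * p 0 := fun s hs =>
    hS4 _ (h.pressure_nonneg hs) (hle s hs)
  have hmass : tovMass S p r ≤ 16 / 3 * Real.pi * p 0 * r ^ 3 := by
    calc tovMass S p r ≤ tovMass (fun _ => 4 * p 0) p r :=
          tovMass_mono hr.le (h.intervalIntegrable hSc hr.le)
            (Continuous.intervalIntegrable (by fun_prop) _ _) fun s hs => hSle s hs.1
      _ = 16 / 3 * Real.pi * p 0 * r ^ 3 := by rw [tovMass_const]; ring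
  have hmass' : (1 - metricFactor S p r) / 2 ≤ 16 / 3 * Real.pi * p 0 * r ^ 2 := by
    calc (1 - metricFactor S p r) / 2 = tovMass S p r / r := by rw [metricFactor]; ring
      _ ≤ 16 / 3 * Real.pi * p 0 * r ^ 2 := by rw [div_le_iff₀ hr]; linarith
  have hpress : scaledPressure p r ≤ 4 * Real.pi * r ^ 2 * p 0 := by
    rw [scaledPressure]
    gcongr
    exact hle r hr.le
  have hneg := h.neg_deriv_le hS hB hr (K := 5 * p 0) (M := 28 / 3 * Real.pi * p 0 * r ^ 2)
    (by linarith [hSle r hr.le, hle r hr.le]) (by linarith)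
  have hsimp : 9 * (5 * p 0) * (28 / 3 * Real.pi * p 0 * r ^ 2) / r =
      420 * Real.pi * p 0 ^ 2 * r := by
    field_simp
    ring
  linarith

theorem half_center_le (h : SolvesTOV S p) (hSc : ContinuousOn S (Set.Ici 0))
    (hS : ∀ q, 0 ≤ q → 0 ≤ S q) (hB : BuchdahlBound S p)
    (hS4 : ∀ q, 0 ≤ q → q ≤ p 0 → S q ≤ 4 * p 0) (hr : 0 ≤ r) (hpr : p 0 * r ^ 2 ≤ 1 / 1680) :
    p 0 / 2 ≤ p r := by
  have hmono : MonotoneOn (fun s => p s + 210 * Real.pi * p 0 ^ 2 * s ^ 2) (Set.Ici 0) := by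
    refine monotoneOn_of_hasDerivWithinAt_nonneg (convex_Ici 0)
      (h.continuousOn.add (by fun_prop))
      (fun s hs => ((h.hasDerivAt (by simpa using hs)).add
        ((hasDerivAt_pow 2 s).const_mul _)).hasDerivWithinAt) fun s hs => ?_
    have hderiv := h.deriv_ge_near_center hSc hS hB hS4 (r := s) (by simpa using hs)
    push_cast
    linarith
  have hcenter : p 0 ≤ p r + 210 * Real.pi * p 0 ^ 2 * r ^ 2 := by
    simpa using hmono Set.self_mem_Ici hr hr
  have hsmall : 210 * Real.pi * p 0 ^ 2 * r ^ 2 ≤ p 0 / 2 := by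
    have hp0 := h.pressure_nonneg le_rfl
    calc 210 * Real.pi * p 0 ^ 2 * r ^ 2 = 210 * Real.pi * p 0 * (p 0 * r ^ 2) := by ring
      _ ≤ 210 * 4 * p 0 * (1 / 1680) := by gcongr; exact Real.pi_le_four
      _ = p 0 / 2 := by ring
  linarith

theorem scaledPressure_le (h : SolvesTOV S p) (hSc : ContinuousOn S (Set.Ici 0))
    (hS : ∀ q, 0 ≤ q → 0 ≤ S q) (hB : BuchdahlBound S p) (hη : η ≤ 1)
    (hrad : IsNearlyRadiative S L η) (hr : 0 < r) (hpr : L ≤ p r) :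
    scaledPressure p r ≤ 2 / 3 := by
  have hdensity : ∀ s ∈ Set.Icc 0 r, 2 * p r ≤ S (p s) := fun s hs => by
    have hps := h.pressure_nonneg hs.1
    have hle : p r ≤ p s := h.antitoneOn hS hs.1 hr.le hs.2
    have hdefect := neg_le_of_abs_le (hrad (p s) hps (hpr.trans hle))
    nlinarith
  have hmass : 4 * Real.pi / 3 * (2 * p r) * r ^ 3 ≤ tovMass S p r := by
    rw [← tovMass_const _ p]
    exact tovMass_mono hr.le (Continuous.intervalIntegrable (by fun_prop) _ _)
      (h.intervalIntegrable hSc hr.le) hdensity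
  have hbuch := hB r hr
  rw [div_le_iff₀ hr] at hbuch
  refine le_of_mul_le_mul_right ?_ hr
  rw [scaledPressure]
  linarith

theorem deriv_ge_of_isNearlyRadiative (h : SolvesTOV S p) (hSc : ContinuousOn S (Set.Ici 0))
    (hS : ∀ q, 0 ≤ q → 0 ≤ S q) (hB : BuchdahlBound S p) (hη : η ≤ 1)
    (hrad : IsNearlyRadiative S L η) (hr : 0 < r) (hpr : L ≤ p r) :
    -(50 * p r / r) ≤ deriv p r := by
  have hp := h.pressure_nonneg hr.le
  have hdensity : S (p r) + p r ≤ 5 * p r := by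
    nlinarith [le_of_abs_le (hrad _ hp hpr)]
  have hfield : (1 - metricFactor S p r) / 2 + scaledPressure p r ≤ 10 / 9 := by
    linarith [h.scaledPressure_le hSc hS hB hη hrad hr hpr, (h.metricFactor_mem_Icc hS hB hr).1]
  have hneg := h.neg_deriv_le hS hB hr hdensity hfield
  have hsimp : 9 * (5 * p r) * (10 / 9) / r = 50 * p r / r := by ring
  linarith

theorem monotoneOn_mul_pow (h : SolvesTOV S p) (hSc : ContinuousOn S (Set.Ici 0))
    (hS : ∀ q, 0 ≤ q → 0 ≤ S q) (hB : BuchdahlBound S p) (hη : η ≤ 1)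
    (hrad : IsNearlyRadiative S L η) {a b : ℝ} (ha : 0 < a) (hL : ∀ s ∈ Set.Icc a b, L ≤ p s) :
    MonotoneOn (fun s => p s * s ^ 50) (Set.Icc a b) := by
  have hderiv : ∀ s ∈ Set.Icc a b, HasDerivAt (fun s => p s * s ^ 50) _ s := fun s hs =>
    (h.hasDerivAt (ha.trans_le hs.1)).mul (hasDerivAt_pow 50 s)
  refine monotoneOn_of_hasDerivWithinAt_nonneg (convex_Icc a b)
    (fun s hs => (hderiv s hs).continuousAt.continuousWithinAt)
    (fun s hs => (hderiv s (interior_subset hs)).hasDerivWithinAt) fun s hs => ?_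
  have hs := interior_subset hs
  have hs0 : 0 < s := ha.trans_le hs.1
  have hge := mul_le_mul_of_nonneg_right
    (h.deriv_ge_of_isNearlyRadiative hSc hS hB hη hrad hs0 (hL s hs)) (pow_nonneg hs0.le 50)
  have hsimp : -(50 * p s / s) * s ^ 50 = -(p s * (50 * s ^ 49)) := by field_simp
  push_cast
  linarith

theorem level_le (h : SolvesTOV S p) (hSc : ContinuousOn S (Set.Ici 0))
    (hS : ∀ q, 0 ≤ q → 0 ≤ S q) (hB : BuchdahlBound S p) (hη : η ≤ 1)
    (hrad : IsNearlyRadiative S L η) (hL0 : 0 ≤ L) {a b : ℝ} (ha : 0 < a) (hab : a ≤ b)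
    (hL : L * b ^ 50 < p a * a ^ 50) : L ≤ p b := by
  by_contra! hlt
  have hLa : L ≤ p a := by
    refine (lt_of_mul_lt_mul_right (lt_of_le_of_lt ?_ hL) (pow_nonneg ha.le 50)).le
    gcongr
  obtain ⟨c, hc, hpc⟩ := intermediate_value_Icc' hab
    (h.continuousOn.mono fun x hx => ha.le.trans hx.1) ⟨hlt.le, hLa⟩
  have hc0 : 0 ≤ c := ha.le.trans hc.1
  have hLc : ∀ s ∈ Set.Icc a c, L ≤ p s := fun s hs =>
    hpc ▸ h.antitoneOn hS (ha.le.trans hs.1) hc0 hs.2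
  have hmono : p a * a ^ 50 ≤ L * c ^ 50 := hpc ▸
    h.monotoneOn_mul_pow hSc hS hB hη hrad ha hLc ⟨le_rfl, hc.1⟩ ⟨hc.1, le_rfl⟩ hc.1
  have hcb : L * c ^ 50 ≤ L * b ^ 50 := by gcongr; exact hc.2
  linarith

theorem hasDerivAt_scaledPressure (h : SolvesTOV S p) (hr : 0 < r) :
    HasDerivAt (scaledPressure p)
      (bkzFieldU (scaledPressure p r) (metricFactor S p r) (radiationDefect S p r) / r) r := by
  have hv := (h.metricFactor_pos hr).ne'
  refine (((hasDerivAt_pow 2 r).const_mul (4 * Real.pi)).mul (h.hasDerivAt hr)).congr_deriv ?_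
  rw [← neg_neg (deriv p r), h.neg_deriv_eq hr, bkzFieldU, radiationDefect, scaledPressure]
  field_simp
  push_cast
  ring

theorem hasDerivAt_metricFactor (h : SolvesTOV S p) (hSc : ContinuousOn S (Set.Ici 0))
    (hr : 0 < r) :
    HasDerivAt (metricFactor S p)
      (bkzFieldV (scaledPressure p r) (metricFactor S p r) (radiationDefect S p r) / r) r := by
  refine ((((h.hasDerivAt_tovMass hSc hr).const_mul 2).div (hasDerivAt_id r)
    hr.ne').const_sub 1).congr_deriv ?_
  rw [bkzFieldV, scaledPressure, metricFactor, radiationDefect]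
  simp only [id]
  field_simp
  ring

theorem isBKZOrbit (h : SolvesTOV S p) (hSc : ContinuousOn S (Set.Ici 0))
    (hS : ∀ q, 0 ≤ q → 0 ≤ S q) (hB : BuchdahlBound S p) (hη : η ≤ 1)
    (hrad : IsNearlyRadiative S L η) (hL : 0 < L) {I : Set ℝ}
    (hI : ∀ t ∈ I, L ≤ p (Real.exp t)) :
    IsBKZOrbit η (fun t => scaledPressure p (Real.exp t)) (fun t => metricFactor S p (Real.exp t))
      (fun t => radiationDefect S p (Real.exp t)) I where
  hasDerivAt_u t _ :=
    ((h.hasDerivAt_scaledPressure (Real.exp_pos t)).comp t (Real.hasDerivAt_exp t)).congr_deriv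
      (div_mul_cancel₀ _ (Real.exp_ne_zero t))
  hasDerivAt_v t _ :=
    ((h.hasDerivAt_metricFactor hSc (Real.exp_pos t)).comp t (Real.hasDerivAt_exp t)).congr_deriv
      (div_mul_cancel₀ _ (Real.exp_ne_zero t))
  u_mem t ht := by
    refine ⟨?_, h.scaledPressure_le hSc hS hB hη hrad (Real.exp_pos t) (hI t ht)⟩
    have hp := hL.trans_le (hI t ht)
    rw [scaledPressure]
    positivity
  v_mem t _ := h.metricFactor_mem_Icc hS hB (Real.exp_pos t)
  abs_e_le t ht := by
    have hdefect := hrad _ (h.pressure_nonneg (Real.exp_pos t).le) (hI t ht)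
    rw [radiationDefect, scaledPressure, abs_mul, abs_of_nonneg (by positivity), mul_left_comm]
    gcongr

end SolvesTOV

/-- At radius `r`, mass `m`, pressure `q` and density `σ`, the quantities `r²ρ`, `r²p`, `m/r`,
`e^{2λ}`, `2rμ'` and `rλ'` are within `ε` of their values for the BKZ solution. -/
def IsBKZApprox (ε r m q σ : ℝ) : Prop :=
  |r ^ 2 * σ - 3 / (56 * Real.pi)| ≤ ε ∧
  |r ^ 2 * q - 1 / (56 * Real.pi)| ≤ ε ∧
  |m / r - 3 / 14| ≤ ε ∧
  |(1 - 2 * m / r)⁻¹ - 7 / 4| ≤ ε ∧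
  |2 * r * ((1 - 2 * m / r)⁻¹ * (m / r ^ 2 + 4 * Real.pi * r * q)) - 1| ≤ ε ∧
  r * |(1 - 2 * m / r)⁻¹ * (4 * Real.pi * r * σ - m / r ^ 2)| ≤ ε

theorem isBKZApprox_of_abs_le {r m q σ D : ℝ} (hr : 0 < r) (hv : 1 / 9 ≤ 1 - 2 * m / r)
    (hu : |4 * Real.pi * r ^ 2 * q - 1 / 14| ≤ D) (hvD : |1 - 2 * m / r - 4 / 7| ≤ D)
    (he : |4 * Real.pi * r ^ 2 * (σ - 3 * q)| ≤ D) : IsBKZApprox (100 * D) r m q σ := by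
  obtain ⟨v, hv_eq⟩ : ∃ v, v = 1 - 2 * m / r := ⟨_, rfl⟩
  obtain ⟨u, hu_eq⟩ : ∃ u, u = 4 * Real.pi * r ^ 2 * q := ⟨_, rfl⟩
  obtain ⟨e, he_eq⟩ : ∃ e, e = 4 * Real.pi * r ^ 2 * (σ - 3 * q) := ⟨_, rfl⟩
  have hm : m = (1 - v) / 2 * r := by rw [hv_eq]; field_simp; ring
  have hq : q = u / (4 * Real.pi * r ^ 2) := by rw [hu_eq]; field_simp
  have hσ : σ = (e + 3 * u) / (4 * Real.pi * r ^ 2) := by rw [he_eq, hu_eq]; field_simp; ring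
  rw [← hv_eq] at hv hvD
  rw [← hu_eq] at hu
  rw [← he_eq] at he
  have hv0 : 0 < v := by linarith
  have hD0 : 0 ≤ D := (abs_nonneg _).trans hu
  rw [abs_le] at hu hvD he
  have abs_div_le : ∀ {x y w : ℝ}, 1 / 9 ≤ w → -(11 * D) ≤ x → x ≤ 11 * D → y = x / w →
      |y| ≤ 100 * D := by
    rintro x _ w hw hx hx' rfl
    have hw0 : 0 < w := by linarith
    rw [abs_div, abs_of_pos hw0, div_le_iff₀ hw0]
    exact (abs_le.2 ⟨hx, hx'⟩).trans (by nlinarith)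
  have hπ : 1 / 9 ≤ 4 * Real.pi := by linarith [Real.pi_gt_three]
  rw [IsBKZApprox, ← hv_eq, ← abs_of_pos hr, ← abs_mul, abs_of_pos hr, hm, hq, hσ]
  refine ⟨abs_div_le (x := e + 3 * (u - 1 / 14)) hπ (by linarith) (by linarith) ?_,
    abs_div_le (x := u - 1 / 14) hπ (by linarith) (by linarith) ?_,
    abs_div_le (x := -(v - 4 / 7)) (w := 2) (by norm_num) (by linarith) (by linarith) ?_,
    abs_div_le (x := -(7 / 4) * (v - 4 / 7)) hv (by linarith) (by linarith) ?_,
    abs_div_le (x := 2 * (u - 1 / 14) - 2 * (v - 4 / 7)) hv (by linarith) (by linarith) ?_,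
    abs_div_le (x := e + 3 * (u - 1 / 14) + (v - 4 / 7) / 2) hv (by linarith) (by linarith) ?_⟩
  all_goals
    field_simp
    ring

theorem bkzEnergy_le_of_mem_Icc {u v : ℝ} (hu : u ∈ Set.Icc (1 / 5000) (2 / 3))
    (hv : v ∈ Set.Icc (1 / 9) 1) : bkzEnergy u v ≤ 20000 := by
  obtain ⟨hu0, hu1⟩ := hu
  obtain ⟨hv0, hv1⟩ := hv
  have hu' : 3 * (u - 1 / 14) ^ 2 / u ≤ 15000 := by
    rw [div_le_iff₀ (by linarith)]
    nlinarith
  have hv' : 2 * (v - 4 / 7) ^ 2 / v ≤ 18 := by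
    rw [div_le_iff₀ (by linarith)]
    nlinarith
  linarith [bkzEnergy_le (u := u) (v := v) (by linarith) (by linarith)]

theorem le_four_mul_of_abs_sub_le_sqrt {S : ℝ → ℝ} {C₀ P q : ℝ}
    (hS : ∀ q, 0 ≤ q → |S q - 3 * q| ≤ C₀ * √q) (hP : C₀ ≤ √P) (hq : 0 ≤ q) (hqP : q ≤ P) :
    S q ≤ 4 * P := by
  have hsqrt : C₀ * √q ≤ √P * √P := by gcongr
  rw [Real.mul_self_sqrt (hq.trans hqP)] at hsqrt
  linarith [le_of_abs_le (hS q hq)]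

namespace SolvesTOV

variable {S p : ℝ → ℝ} {r L Λ η : ℝ}

theorem sixth_sq_le (h : SolvesTOV S p) (hSc : ContinuousOn S (Set.Ici 0))
    (hS : ∀ q, 0 ≤ q → 0 ≤ S q) (hB : BuchdahlBound S p)
    (hS4 : ∀ q, 0 ≤ q → q ≤ p 0 → S q ≤ 4 * p 0) (hL : 0 < L) (hp0 : p 0 = L ^ 2 / 3) :
    L ^ 2 / 6 ≤ p (100 * L)⁻¹ := by
  have hhalf := h.half_center_le hSc hS hB hS4 (r := (100 * L)⁻¹) (by positivity)
    (by rw [hp0]; field_simp; norm_num)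
  rw [hp0] at hhalf
  linarith

theorem le_pressure_of_le_div (h : SolvesTOV S p) (hSc : ContinuousOn S (Set.Ici 0))
    (hS : ∀ q, 0 ≤ q → 0 ≤ S q) (hB : BuchdahlBound S p) (hη : η ≤ 1)
    (hrad : IsNearlyRadiative S L η) (hL : 0 < L) (hpL : L ^ 2 / 6 ≤ p (100 * L)⁻¹)
    (hΛ : 6 * (100 * Λ) ^ 50 < L) (hr : r ∈ Set.Icc (100 * L)⁻¹ (Λ / L)) : L ≤ p r := by
  have hr0 : 0 < r := lt_of_lt_of_le (by positivity) hr.1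
  refine h.level_le hSc hS hB hη hrad hL.le (by positivity) hr.1 ?_
  calc L * r ^ 50 ≤ L * (Λ / L) ^ 50 := by gcongr; exact hr.2
    _ = L / 6 * (6 * (100 * Λ) ^ 50) * (100 * L)⁻¹ ^ 50 := by field_simp
    _ < L / 6 * L * (100 * L)⁻¹ ^ 50 := by gcongr
    _ = L ^ 2 / 6 * (100 * L)⁻¹ ^ 50 := by ring
    _ ≤ p (100 * L)⁻¹ * (100 * L)⁻¹ ^ 50 := by gcongr

theorem bkzEnergy_start_le (h : SolvesTOV S p) (hSc : ContinuousOn S (Set.Ici 0))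
    (hS : ∀ q, 0 ≤ q → 0 ≤ S q) (hB : BuchdahlBound S p) (hη : η ≤ 1)
    (hrad : IsNearlyRadiative S L η) (hL : 0 < L) (hpL : L ^ 2 / 6 ≤ p (100 * L)⁻¹)
    (hLp : L ≤ p (100 * L)⁻¹) :
    bkzEnergy (scaledPressure p (100 * L)⁻¹) (metricFactor S p (100 * L)⁻¹) ≤ 20000 := by
  have ha : 0 < (100 * L)⁻¹ := by positivity
  refine bkzEnergy_le_of_mem_Icc ⟨?_, h.scaledPressure_le hSc hS hB hη hrad ha hLp⟩
    (h.metricFactor_mem_Icc hS hB ha)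
  calc (1 / 5000 : ℝ) = 4 * 3 * (100 * L)⁻¹ ^ 2 * (L ^ 2 / 6) := by field_simp; norm_num
    _ ≤ scaledPressure p (100 * L)⁻¹ := by
      rw [scaledPressure]
      gcongr
      exact Real.pi_gt_three.le

theorem bkzEnergy_le_rpow (h : SolvesTOV S p) (hSc : ContinuousOn S (Set.Ici 0))
    (hS : ∀ q, 0 ≤ q → 0 ≤ S q) (hB : BuchdahlBound S p) (hη : η ≤ 1)
    (hrad : IsNearlyRadiative S L η) (hL : 0 < L) (hpL : L ^ 2 / 6 ≤ p (100 * L)⁻¹)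
    (hΛ : 6 * (100 * Λ) ^ 50 < L) (hlog : 60 * η * Real.log (100 * Λ) ≤ 1)
    (hr : r ∈ Set.Icc (100 * L)⁻¹ (Λ / L)) :
    bkzEnergy (scaledPressure p r) (metricFactor S p r) ≤
      20000 * (100 * L * r) ^ (-bkzRate 20001) + 60 * η / bkzRate 20001 := by
  have ha : 0 < (100 * L)⁻¹ := by positivity
  have hr0 : 0 < r := ha.trans_le hr.1
  have hΛL : 0 < Λ / L := hr0.trans_le hr.2
  have hLp : ∀ s ∈ Set.Icc (100 * L)⁻¹ (Λ / L), L ≤ p s := fun s hs =>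
    h.le_pressure_of_le_div hSc hS hB hη hrad hL hpL hΛ hs
  have horbit := h.isBKZOrbit hSc hS hB hη hrad hL
    (I := Set.Icc (Real.log (100 * L)⁻¹) (Real.log (Λ / L)))
    fun t ht => hLp _ ⟨(Real.log_le_iff_le_exp ha).1 ht.1, (Real.le_log_iff_exp_le hΛL).1 ht.2⟩
  have hstart := h.bkzEnergy_start_le hSc hS hB hη hrad hL hpL
    (hLp _ ⟨le_rfl, hr.1.trans hr.2⟩)
  have hlength : Real.log (Λ / L) - Real.log (100 * L)⁻¹ = Real.log (100 * Λ) := by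
    rw [← Real.log_div hΛL.ne' ha.ne']
    congr 1
    field_simp
  have htime : Real.log r - Real.log (100 * L)⁻¹ = Real.log (100 * L * r) := by
    rw [← Real.log_div hr0.ne' ha.ne']
    congr 1
    field_simp
  have hdecay := horbit.bkzEnergy_le_exp (B := 20000)
    ⟨Real.log_le_log ha hr.1, Real.log_le_log hr0 hr.2⟩
    (by simpa only [Real.exp_log ha] using hstart) (by rwa [hlength])
  simp only [Real.exp_log hr0] at hdecay
  rwa [htime, mul_comm (-bkzRate _), ← Real.rpow_def_of_pos (by positivity),
    show (20000 : ℝ) + 1 = 20001 by norm_num] at hdecay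

theorem isBKZApprox_of_bkzEnergy_le (h : SolvesTOV S p) (hSc : ContinuousOn S (Set.Ici 0))
    (hS : ∀ q, 0 ≤ q → 0 ≤ S q) (hB : BuchdahlBound S p) (hη : η ≤ 1)
    (hrad : IsNearlyRadiative S L η) (hL : 0 < L) (hr : 0 < r) (hLp : L ≤ p r) {D : ℝ}
    (hηD : η ≤ D) (hD : 0 ≤ D)
    (hW : 10 * bkzEnergy (scaledPressure p r) (metricFactor S p r) ≤ D ^ 2) :
    IsBKZApprox (100 * D) r (tovMass S p r) (p r) (S (p r)) := by
  have horbit := h.isBKZOrbit hSc hS hB hη hrad hL (I := {Real.log r}) fun t ht => by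
    rwa [Set.mem_singleton_iff.1 ht, Real.exp_log hr]
  have hu := horbit.u_mem _ rfl
  have hv := horbit.v_mem _ rfl
  have he := horbit.abs_e_le _ rfl
  simp only [Real.exp_log hr] at hu hv he
  have hdist := (sq_add_sq_le_bkzEnergy hu ⟨by linarith [hv.1], hv.2⟩).trans hW
  refine isBKZApprox_of_abs_le hr hv.1
    (abs_le_of_sq_le_sq ((le_add_of_nonneg_right (sq_nonneg _)).trans hdist) hD)
    (abs_le_of_sq_le_sq ((le_add_of_nonneg_left (sq_nonneg _)).trans hdist) hD) ?_
  calc |radiationDefect S p r| ≤ η * scaledPressure p r := he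
    _ ≤ D * 1 := by gcongr; exacts [hu.1.le, by linarith [hu.2]]
    _ = D := mul_one D

theorem isBKZApprox_of_mem_Icc (h : SolvesTOV S p) (hSc : ContinuousOn S (Set.Ici 0))
    (hS : ∀ q, 0 ≤ q → 0 ≤ S q) (hB : BuchdahlBound S p)
    (hrad : IsNearlyRadiative S L η) (hL : 0 < L) (hpL : L ^ 2 / 6 ≤ p (100 * L)⁻¹)
    (hΛ : 6 * (100 * Λ) ^ 50 < L) (hlog : 60 * η * Real.log (100 * Λ) ≤ 1)
    (hr : r ∈ Set.Icc (100 * L)⁻¹ (Λ / L)) {ε : ℝ} (hε : ε ∈ Set.Icc 0 1) (hηε : η ≤ ε ^ 2)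
    (hrε : (100 * L * r) ^ (-bkzRate 20001) ≤ ε ^ 2) :
    IsBKZApprox (100 * (10 * (20000 + 60 / bkzRate 20001)) * ε) r
      (tovMass S p r) (p r) (S (p r)) := by
  obtain ⟨hε0, hε1⟩ := hε
  have hη : η ≤ 1 := hηε.trans (pow_le_one₀ hε0 hε1)
  have hr0 : 0 < r := lt_of_lt_of_le (by positivity) hr.1
  have hc : 0 < bkzRate 20001 := bkzRate_pos
  obtain ⟨A, hA⟩ : ∃ A, A = 10 * (20000 + 60 / bkzRate 20001) := ⟨_, rfl⟩
  have hA1 : 1 ≤ A := by linarith [div_pos (by norm_num : (0 : ℝ) < 60) hc]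
  rw [← hA, mul_assoc]
  refine h.isBKZApprox_of_bkzEnergy_le hSc hS hB hη hrad hL hr0
    (h.le_pressure_of_le_div hSc hS hB hη hrad hL hpL hΛ hr) ?_ (by positivity) ?_
  · calc η ≤ ε * ε := hηε.trans_eq (sq ε)
      _ ≤ A * ε := by gcongr; exact hε1.trans hA1
  · calc 10 * bkzEnergy (scaledPressure p r) (metricFactor S p r)
        ≤ 10 * (20000 * (100 * L * r) ^ (-bkzRate 20001) + 60 * η / bkzRate 20001) := by
          gcongr
          exact h.bkzEnergy_le_rpow hSc hS hB hη hrad hL hpL hΛ hlog hr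
      _ ≤ 10 * (20000 * ε ^ 2 + 60 * ε ^ 2 / bkzRate 20001) := by gcongr
      _ = A * ε ^ 2 := by rw [hA]; ring
      _ ≤ A ^ 2 * ε ^ 2 := by gcongr; exact le_self_pow₀ hA1 two_ne_zero
      _ = (A * ε) ^ 2 := (mul_pow A ε 2).symm

theorem isBKZApprox_of_center (h : SolvesTOV S p) (hSc : ContinuousOn S (Set.Ici 0))
    (hS : ∀ q, 0 ≤ q → 0 ≤ S q) (hB : BuchdahlBound S p) {C₀ X ε : ℝ} (hC₀ : 0 ≤ C₀)
    (hSrad : ∀ q, 0 ≤ q → |S q - 3 * q| ≤ C₀ * √q) (hp0 : p 0 = (X ^ 2) ^ 2 / 3) (hX : 2 ≤ X)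
    (hε : ε ∈ Set.Icc 0 1) (hC₀ε : C₀ ≤ ε ^ 2 * X) (hΛ : 6 * (100 * Λ) ^ 50 < X ^ 2)
    (hlog : 6000 * C₀ * Λ ≤ X) (hr : r ∈ Set.Icc (X ^ 2)⁻¹ (Λ / X ^ 2))
    (hrε : (100 * X ^ 2 * r) ^ (-bkzRate 20001) ≤ ε ^ 2) :
    IsBKZApprox (100 * (10 * (20000 + 60 / bkzRate 20001)) * ε) r
      (tovMass S p r) (p r) (S (p r)) := by
  have hX0 : 0 < X := by linarith
  have hL : 0 < X ^ 2 := by positivity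
  have hC₀p : C₀ ≤ √(p 0) := by
    have hε1 : ε ^ 2 ≤ 1 := pow_le_one₀ hε.1 hε.2
    refine (hC₀ε.trans (mul_le_of_le_one_left hX0.le hε1)).trans (Real.le_sqrt_of_sq_le ?_)
    have hX2 : 4 ≤ X ^ 2 := by nlinarith
    rw [hp0]
    nlinarith
  have hpL := h.sixth_sq_le hSc hS hB
    (fun q => le_four_mul_of_abs_sub_le_sqrt hSrad hC₀p) hL hp0
  have hrad := isNearlyRadiative_of_abs_sub_le_sqrt hC₀ hL hSrad
  rw [Real.sqrt_sq hX0.le] at hrad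
  have hΛ0 : 0 ≤ Λ := by
    have := (inv_pos.2 hL).le.trans (hr.1.trans hr.2)
    rwa [le_div_iff₀ hL, zero_mul] at this
  have hlog' : 60 * (C₀ / X) * Real.log (100 * Λ) ≤ 1 := by
    calc 60 * (C₀ / X) * Real.log (100 * Λ) ≤ 60 * (C₀ / X) * (100 * Λ) := by
          gcongr
          exact Real.log_le_self (by positivity)
      _ = 6000 * C₀ * Λ / X := by ring
      _ ≤ 1 := (div_le_one hX0).2 hlog
  exact h.isBKZApprox_of_mem_Icc hSc hS hB hrad hL hpL hΛ hlog'
    ⟨(inv_anti₀ hL (by linarith)).trans hr.1, hr.2⟩ hε ((div_le_iff₀ hX0).2 hC₀ε) hrε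

end SolvesTOV

theorem eventually_mul_rpow_le_exp (A s : ℝ) :
    ∀ᶠ κ : ℝ in Filter.atTop, A * κ ^ s ≤ Real.exp κ := by
  have hbound := ((isLittleO_rpow_exp_atTop s).const_mul_left A).bound one_pos
  filter_upwards [hbound] with κ hκ
  rw [one_mul, Real.norm_eq_abs, Real.norm_eq_abs, Real.abs_exp] at hκ
  exact le_of_abs_le hκ

theorem SolvesTOV.isBKZApprox_of_large {S p : ℝ → ℝ} {C₀ α₁ α₂ κ r : ℝ} (h : SolvesTOV S p)
    (hSc : ContinuousOn S (Set.Ici 0)) (hS : ∀ q, 0 ≤ q → 0 ≤ S q) (hB : BuchdahlBound S p)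
    (hC₀ : 0 ≤ C₀) (hSrad : ∀ q, 0 ≤ q → |S q - 3 * q| ≤ C₀ * √q)
    (hp0 : p 0 = Real.exp (4 * κ) / 3) (hα₁ : 0 ≤ α₁) (hκ : 1 ≤ κ)
    (hη : C₀ * κ ^ (α₁ * bkzRate 20001) ≤ Real.exp κ)
    (hlog : 6000 * C₀ * κ ^ α₂ ≤ Real.exp κ)
    (hΛ : 6 * 100 ^ 50 * κ ^ (α₂ * 50) ≤ Real.exp κ)
    (hr₁ : κ ^ α₁ * Real.exp (-2 * κ) ≤ r) (hr₂ : r ≤ κ ^ α₂ * Real.exp (-2 * κ)) :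
    IsBKZApprox (100 * (10 * (20000 + 60 / bkzRate 20001)) * κ ^ (-(α₁ * bkzRate 20001 / 2))) r
      (tovMass S p r) (p r) (S (p r)) := by
  have hκ0 : 0 < κ := one_pos.trans_le hκ
  have hc : 0 < bkzRate 20001 := bkzRate_pos
  have hX : 2 ≤ Real.exp κ := by linarith [Real.add_one_le_exp κ]
  have hscale : Real.exp (-2 * κ) = (Real.exp κ ^ 2)⁻¹ := by
    rw [← Real.exp_nat_mul, ← Real.exp_neg, neg_mul, Nat.cast_ofNat]
  rw [hscale] at hr₁ hr₂
  have hr : (Real.exp κ ^ 2)⁻¹ ≤ r :=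
    (le_mul_of_one_le_left (by positivity) (Real.one_le_rpow hκ hα₁)).trans hr₁
  have hε : κ ^ (-(α₁ * bkzRate 20001 / 2)) ≤ 1 :=
    Real.rpow_le_one_of_one_le_of_nonpos hκ (neg_nonpos.2 (by positivity))
  have hεsq : (κ ^ (-(α₁ * bkzRate 20001 / 2))) ^ 2 = κ ^ (-(α₁ * bkzRate 20001)) := by
    rw [← Real.rpow_mul_natCast hκ0.le]
    congr 1
    push_cast
    ring
  refine h.isBKZApprox_of_center hSc hS hB hC₀ hSrad ?_ hX ⟨by positivity, hε⟩ ?_ ?_ hlog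
    ⟨hr, hr₂⟩ ?_
  · rw [hp0, ← pow_mul, ← Real.exp_nat_mul]
    norm_num
  · rwa [hεsq, Real.rpow_neg hκ0.le, inv_mul_eq_div, le_div_iff₀ (by positivity)]
  · calc 6 * (100 * κ ^ α₂) ^ 50 = 6 * 100 ^ 50 * κ ^ (α₂ * 50) := by
          rw [mul_pow, ← mul_assoc, ← Real.rpow_mul_natCast hκ0.le, Nat.cast_ofNat]
      _ ≤ Real.exp κ := hΛ
      _ < Real.exp κ ^ 2 := by nlinarith
  · have hκr : κ ^ α₁ ≤ 100 * Real.exp κ ^ 2 * r := by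
      rw [← div_eq_mul_inv, div_le_iff₀ (by positivity)] at hr₁
      nlinarith [Real.rpow_pos_of_pos hκ0 α₁]
    calc (100 * Real.exp κ ^ 2 * r) ^ (-bkzRate 20001) ≤ (κ ^ α₁) ^ (-bkzRate 20001) :=
          Real.rpow_le_rpow_of_nonpos (by positivity) hκr (neg_nonpos.2 hc.le)
      _ = _ := by rw [hεsq, ← Real.rpow_mul hκ0.le, mul_neg]

theorem stmt10_general (C₀ α₁ α₂ : ℝ) (hC₀ : 0 ≤ C₀) (hα₁ : 0 < α₁) :
    ∃ κ₀ : ℝ, 0 < κ₀ ∧ ∃ δ : ℝ, 0 < δ ∧ ∃ C : ℝ, 0 < C ∧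
      ∀ κ : ℝ, κ₀ ≤ κ → ∀ S p : ℝ → ℝ, ContinuousOn S (Set.Ici 0) →
        (∀ q, 0 ≤ q → 0 ≤ S q) → (∀ q, 0 ≤ q → |S q - 3 * q| ≤ C₀ * √q) →
        SolvesTOV S p → p 0 = Real.exp (4 * κ) / 3 → BuchdahlBound S p →
        ∀ r : ℝ, κ ^ α₁ * Real.exp (-2 * κ) ≤ r → r ≤ κ ^ α₂ * Real.exp (-2 * κ) →
          IsBKZApprox (C * κ ^ (-δ)) r (tovMass S p r) (p r) (S (p r)) := by
  have hc : 0 < bkzRate 20001 := bkzRate_pos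
  obtain ⟨κ₀, hκ₀⟩ := Filter.eventually_atTop.1 ((Filter.eventually_ge_atTop (1 : ℝ)).and
    ((eventually_mul_rpow_le_exp C₀ (α₁ * bkzRate 20001)).and
      ((eventually_mul_rpow_le_exp (6000 * C₀) α₂).and
        (eventually_mul_rpow_le_exp (6 * 100 ^ 50) (α₂ * 50)))))
  refine ⟨max κ₀ 1, by positivity, α₁ * bkzRate 20001 / 2, by positivity,
    100 * (10 * (20000 + 60 / bkzRate 20001)), by positivity, ?_⟩
  intro κ hκ S p hSc hS hSrad h hp0 hB r hr₁ hr₂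
  obtain ⟨hκ1, hη, hlog, hΛ⟩ := hκ₀ κ ((le_max_left κ₀ 1).trans hκ)
  exact h.isBKZApprox_of_large hSc hS hB hC₀ hSrad hp0 hα₁.le hκ1 hη hlog hΛ hr₁ hr₂

/-- In the ultrarelativistic limit `κ → ∞`, on the annulus
`[κ^{α₁} e^{−2κ}, κ^{α₂} e^{−2κ}]` the steady states with central pressure `e^{4κ}/3` are
captured by the BKZ solution: `r²ρ ≈ 3/(56π)`, `r²p ≈ 1/(56π)`, `m/r ≈ 3/14`, `e^{2λ} ≈ 7/4`,
`2rμ′ ≈ 1`, `r|λ′| ≈ 0`, all with error `O(κ^{−δ})`. -/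
theorem stmt10
    (S : ℝ → ℝ) (C₀ : ℝ) (hC₀ : 0 < C₀)
    (hScont : ContinuousOn S (Set.Ici 0)) (hS0 : S 0 = 0)
    (hSnonneg : ∀ q : ℝ, 0 ≤ q → 0 ≤ S q)
    (hS : ∀ q : ℝ, 0 ≤ q → |S q - 3 * q| ≤ C₀ * Real.sqrt q)
    (p : ℝ → ℝ → ℝ)
    (hp : ∀ κ : ℝ, 0 < κ → SolvesTOV S (p κ) ∧ p κ 0 = Real.exp (4 * κ) / 3 ∧
      ∀ r : ℝ, 0 < r → 2 * tovMass S (p κ) r / r ≤ 8 / 9)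
    (pstar : ℝ → ℝ)
    (hpstar : SolvesTOV (fun q => 3 * q) pstar)
    (hpstarpos : ∀ r : ℝ, 0 ≤ r → 0 < pstar r)
    (hpstar0 : pstar 0 = 1 / 3)
    (hpstarBuch : ∀ r : ℝ, 0 < r → 2 * tovMass (fun q => 3 * q) pstar r / r ≤ 8 / 9) :
    ∃ α₁ α₂ : ℝ, 0 < α₁ ∧ α₁ < α₂ ∧ α₂ < 1 / 4 ∧
      ∃ κ₀ : ℝ, 0 < κ₀ ∧ ∃ δ : ℝ, 0 < δ ∧ ∃ C : ℝ, 0 < C ∧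
        ∀ κ : ℝ, κ₀ ≤ κ → ∀ r : ℝ,
          κ ^ α₁ * Real.exp (-2 * κ) ≤ r → r ≤ κ ^ α₂ * Real.exp (-2 * κ) →
          |r ^ 2 * S (p κ r) - 3 / (56 * Real.pi)| ≤ C * κ ^ (-δ) ∧
          |r ^ 2 * p κ r - 1 / (56 * Real.pi)| ≤ C * κ ^ (-δ) ∧
          |tovMass S (p κ) r / r - 3 / 14| ≤ C * κ ^ (-δ) ∧
          |(1 - 2 * tovMass S (p κ) r / r)⁻¹ - 7 / 4| ≤ C * κ ^ (-δ) ∧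
          |2 * r * ((1 - 2 * tovMass S (p κ) r / r)⁻¹ *
              (tovMass S (p κ) r / r ^ 2 + 4 * Real.pi * r * p κ r)) - 1| ≤ C * κ ^ (-δ) ∧
          r * |(1 - 2 * tovMass S (p κ) r / r)⁻¹ *
              (4 * Real.pi * r * S (p κ r) - tovMass S (p κ) r / r ^ 2)| ≤ C * κ ^ (-δ) := by
  obtain ⟨κ₀, hκ₀, δ, hδ, C, hC, h⟩ := stmt10_general C₀ (1 / 8) (1 / 5) hC₀.le (by norm_num)
  refine ⟨1 / 8, 1 / 5, by norm_num, by norm_num, by norm_num, κ₀, hκ₀, δ, hδ, C, hC, ?_⟩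
  intro κ hκ
  obtain ⟨hTOV, hp0, hBuchdahl⟩ := hp κ (hκ₀.trans_le hκ)
  exact h κ hκ S (p κ) hScont hSnonneg hS hTOV hp0 hBuchdahl

end
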